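/- arXiv:1403.3866 — 4 statements merged into one kernel-verified Lean document; each statement's English description precedes it below -/
import Mathlib

section
/- There exists s = (s_1, …, s_n) with all s_i real and strictly positive such that the complex matrix T(s) has n pairwise distinct eigenvalues, i.e. its characteristic polynomial has n distinct complex roots. -/
/-- For `s : Fin n → ℂ`, the complex `n × n` matrix `T(s)` with `T(s) i i = 0`,
`T(s) i j = s j` for `i < j` and `T(s) i j = -s j` for `i > j`
(the specialization `x_i = s_i` of the matrix `T` over `ℂ[x_1, …, x_n]`). -/
def Tmat (n : ℕ) (s : Fin n → ℂ) : Matrix (Fin n) (Fin n) ℂ :=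
  fun i j => if i = j then 0 else if i < j then s j else -s j

/-!
At `s = (1, …, 1)` the matrix `T(s)` is skew-circulant, so the geometric vectors
`(1, z, …, z ^ (n - 1))` with `z ^ n = -1` are eigenvectors; summing the geometric series gives the
eigenvalue `(1 + z) / (1 - z)`. This Möbius transformation is injective, so the `n` distinct
`n`-th roots of `-1` give `n` distinct eigenvalues.
-/

open Finset Matrix Polynomial

theorem Tmat_mulVec_apply {n : ℕ} (s v : Fin n → ℂ) (i : Fin n) :
    (Tmat n s *ᵥ v) i = ∑ j ∈ Ioi i, s j * v j - ∑ j ∈ Iio i, s j * v j := by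
  have entry_mul (j : Fin n) : Tmat n s i j * v j =
      (if i < j then s j * v j else 0) - if j < i then s j * v j else 0 := by
    rcases lt_trichotomy i j with h | rfl | h
    · simp [Tmat, h, h.ne, h.not_gt]
    · simp [Tmat]
    · simp [Tmat, h, h.ne', h.not_gt]
  simp only [mulVec, dotProduct, entry_mul, sum_sub_distrib, ← sum_filter, filter_lt_eq_Ioi,
    filter_gt_eq_Iio]

section GeometricSums

variable {R : Type*} [Ring R] {n : ℕ}

theorem sum_Ioi_pow_mul_sub_one (z : R) (i : Fin n) :
    (∑ j ∈ Ioi i, z ^ (j : ℕ)) * (z - 1) = z ^ n - z ^ (i + 1 : ℕ) := by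
  rw [← geom_sum_Ico_mul z (Nat.succ_le_of_lt i.isLt), Nat.succ_eq_add_one,
    Ico_add_one_left_eq_Ioo, ← Fin.map_valEmbedding_Ioi, sum_map]
  rfl

theorem sum_Iio_pow_mul_sub_one (z : R) (i : Fin n) :
    (∑ j ∈ Iio i, z ^ (j : ℕ)) * (z - 1) = z ^ (i : ℕ) - 1 := by
  rw [← geom_sum_mul z, ← Nat.Iio_eq_range, ← Fin.map_valEmbedding_Iio, sum_map]
  rfl

end GeometricSums

theorem ne_one_of_pow_eq_neg_one {R : Type*} [Ring R] [NeZero (2 : R)] {z : R} {n : ℕ}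
    (hz : z ^ n = -1) : z ≠ 1 := by
  rintro rfl
  rw [one_pow, eq_neg_iff_add_eq_zero, one_add_one_eq_two] at hz
  exact two_ne_zero hz

theorem injOn_one_add_div_one_sub {K : Type*} [Field K] [NeZero (2 : K)] :
    Set.InjOn (fun z : K => (1 + z) / (1 - z)) {1}ᶜ := by
  intro z hz w hw hzw
  have h := (div_eq_div_iff (sub_ne_zero.mpr (Ne.symm hz)) (sub_ne_zero.mpr (Ne.symm hw))).mp hzw
  exact mul_left_cancel₀ (two_ne_zero (α := K)) (by linear_combination h)

theorem card_nthRootsFinset_of_isSepClosed {K : Type*} [Field K] [IsSepClosed K] {n : ℕ}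
    (hn : (n : K) ≠ 0) {a : K} (ha : a ≠ 0) : #(nthRootsFinset n a) = n := by
  classical
  have hsep : (X ^ n - C a).Separable := separable_X_pow_sub_C a hn ha
  rw [nthRootsFinset_def, nthRoots, Multiset.toFinset_card_of_nodup (nodup_roots hsep),
    ← (IsSepClosed.splits_of_separable _ hsep).natDegree_eq_card_roots, natDegree_X_pow_sub_C]

theorem hasEigenvector_Tmat_one {n : ℕ} {z : ℂ} (hz : z ^ n = -1) :
    Module.End.HasEigenvector (toLin' (Tmat n 1)) ((1 + z) / (1 - z)) fun j => z ^ (j : ℕ) := by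
  have hz1 : 1 - z ≠ 0 := sub_ne_zero.mpr (ne_one_of_pow_eq_neg_one hz).symm
  have hn : 0 < n := Nat.pos_of_ne_zero fun h => by norm_num [h] at hz
  refine ⟨Module.End.mem_eigenspace_iff.mpr (funext fun i => ?_),
    fun h => by simpa using congrFun h ⟨0, hn⟩⟩
  simp only [toLin'_apply, Tmat_mulVec_apply, Pi.one_apply, one_mul, Pi.smul_apply, smul_eq_mul]
  field_simp
  linear_combination sum_Iio_pow_mul_sub_one z i - sum_Ioi_pow_mul_sub_one z i - hz

theorem roots_charpoly_Tmat_one {n : ℕ} (hn : n ≠ 0) :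
    (Tmat n 1).charpoly.roots =
      ((nthRootsFinset n (-1 : ℂ)).image fun z => (1 + z) / (1 - z)).val := by
  have pow_eq {z : ℂ} (hz : z ∈ nthRootsFinset n (-1)) : z ^ n = -1 :=
    (mem_nthRootsFinset (Nat.pos_of_ne_zero hn) _).mp hz
  refine roots_eq_of_natDegree_le_card_of_ne_zero ?isRoot ?natDegree_le (charpoly_monic _).ne_zero
  case isRoot =>
    refine forall_mem_image.mpr fun z hz => ?_
    rw [← charpoly_toLin']
    exact (Module.End.hasEigenvalue_iff_isRoot_charpoly _ _).mp
      (Module.End.hasEigenvalue_of_hasEigenvector (hasEigenvector_Tmat_one (pow_eq hz)))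
  case natDegree_le =>
    have hinj : Set.InjOn (fun z : ℂ => (1 + z) / (1 - z)) (nthRootsFinset n (-1 : ℂ)) :=
      injOn_one_add_div_one_sub.mono fun z hz => ne_one_of_pow_eq_neg_one (pow_eq hz)
    rw [charpoly_natDegree_eq_dim, Fintype.card_fin, card_image_of_injOn hinj,
      card_nthRootsFinset_of_isSepClosed (Nat.cast_ne_zero.mpr hn) (neg_ne_zero.mpr one_ne_zero)]

/-- There exists `s` with all entries real and strictly positive such that `T(s)` has
`n` pairwise distinct eigenvalues, i.e. its characteristic polynomial has `n` distinct
complex roots. -/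
theorem exists_pos_real_distinct_eigenvalues (n : ℕ) (hn : 1 ≤ n) :
    ∃ s : Fin n → ℝ, (∀ i, 0 < s i) ∧
      ((Tmat n (fun i => (s i : ℂ))).charpoly.roots.toFinset.card = n) := by
  refine ⟨1, fun _ => one_pos, ?_⟩
  have coe_one : (fun i => ((1 : Fin n → ℝ) i : ℂ)) = 1 := funext fun _ => Complex.ofReal_one
  have nodup_roots : (Tmat n 1).charpoly.roots.Nodup := by
    rw [roots_charpoly_Tmat_one (Nat.one_le_iff_ne_zero.mp hn)]
    exact Finset.nodup _
  rw [coe_one, Multiset.toFinset_card_of_nodup nodup_roots, IsAlgClosed.card_roots_eq_natDegree,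
    charpoly_natDegree_eq_dim, Fintype.card_fin]
end

section
/- For every s = (s_1, …, s_n) with all s_i real and strictly positive, every eigenvalue of the complex matrix T(s) is purely imaginary, i.e. has real part equal to zero. -/
/-! Column scaling factors `T(s)` as `S * D` with `S = T(1)` skew-Hermitian and `D = diag(s)`
positive semidefinite. If `S D v = a v`, pairing with `D v` gives `(Dv)* S (Dv) = a (v* D v)`: the
left side is purely imaginary and `v* D v ≥ 0`. If `v* D v = 0`, then `D v = 0`, so `a v = 0`. -/

open Matrix
open scoped ComplexOrder

section SkewHermitian

variable {m 𝕜 : Type*} [Fintype m] [RCLike 𝕜]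

theorem re_star_dotProduct_mulVec_of_mem_skewAdjoint {S : Matrix m m 𝕜}
    (hS : S ∈ skewAdjoint (Matrix m m 𝕜)) (x : m → 𝕜) :
    RCLike.re (star x ⬝ᵥ S *ᵥ x) = 0 := by
  have hstar : star (star x ⬝ᵥ S *ᵥ x) = -(star x ⬝ᵥ S *ᵥ x) := by
    rw [← star_dotProduct, star_mulVec, ← star_eq_conjTranspose,
      skewAdjoint.mem_iff.mp hS, ← dotProduct_mulVec, neg_mulVec, dotProduct_neg]
  have hre := congrArg RCLike.re hstar
  rw [RCLike.star_def, RCLike.conj_re, map_neg] at hre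
  exact self_eq_neg.mp hre

theorem re_eq_zero_of_skewAdjoint_mul_posSemidef_mulVec_eq_smul {S D : Matrix m m 𝕜}
    (hS : S ∈ skewAdjoint (Matrix m m 𝕜)) (hD : D.PosSemidef) {a : 𝕜} {v : m → 𝕜} (hv : v ≠ 0)
    (hav : (S * D) *ᵥ v = a • v) : RCLike.re a = 0 := by
  have hform : star (D *ᵥ v) ⬝ᵥ S *ᵥ (D *ᵥ v) = a * (star v ⬝ᵥ D *ᵥ v) := by
    rw [mulVec_mulVec, hav, dotProduct_smul, smul_eq_mul, star_mulVec, hD.isHermitian.eq,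
      ← dotProduct_mulVec]
  have hreal : RCLike.im (star v ⬝ᵥ D *ᵥ v) = 0 :=
    (RCLike.nonneg_iff.mp (hD.dotProduct_mulVec_nonneg v)).2
  have hprod : RCLike.re a * RCLike.re (star v ⬝ᵥ D *ᵥ v) = 0 := by
    simpa only [hform, RCLike.mul_re, hreal, mul_zero, sub_zero] using
      re_star_dotProduct_mulVec_of_mem_skewAdjoint hS (D *ᵥ v)
  rcases mul_eq_zero.mp hprod with ha | hre
  · exact ha
  · have hDv : D *ᵥ v = 0 := (hD.dotProduct_mulVec_zero_iff v).mp <|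
      RCLike.ext (hre.trans (map_zero _).symm) (hreal.trans (map_zero _).symm)
    have hsmul : a • v = 0 := by rw [← hav, ← mulVec_mulVec, hDv, mulVec_zero]
    rw [(smul_eq_zero.mp hsmul).resolve_right hv, map_zero]

end SkewHermitian

theorem Tmat_mul_diagonal {n : ℕ} (s d : Fin n → ℂ) :
    Tmat n s * diagonal d = Tmat n (s * d) := by
  ext i j
  simp only [mul_diagonal, Tmat, Pi.mul_apply, ite_mul, zero_mul, neg_mul]

theorem Tmat_one_mem_skewAdjoint (n : ℕ) :
    Tmat n 1 ∈ skewAdjoint (Matrix (Fin n) (Fin n) ℂ) := by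
  rw [skewAdjoint.mem_iff]
  ext i j
  rcases lt_trichotomy i j with h | rfl | h
  · simp [Tmat, star_apply, h, h.ne, h.ne', h.not_gt]
  · simp [Tmat, star_apply]
  · simp [Tmat, star_apply, h, h.ne, h.ne', h.not_gt]

theorem eigenvalues_purely_imaginary_general {n : ℕ} {s : Fin n → ℝ} (hs : ∀ i, 0 ≤ s i)
    {a : ℂ} {v : Fin n → ℂ} (hv : v ≠ 0)
    (hav : (Tmat n (fun i => (s i : ℂ))).mulVec v = a • v) : a.re = 0 := by
  have hD : (diagonal fun i => (s i : ℂ)).PosSemidef :=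
    .diagonal fun i => Complex.zero_le_real.mpr (hs i)
  rw [← one_mul fun i => (s i : ℂ), ← Tmat_mul_diagonal] at hav
  exact re_eq_zero_of_skewAdjoint_mul_posSemidef_mulVec_eq_smul (Tmat_one_mem_skewAdjoint n) hD
    hv hav

/-- For every `s` with all entries real and strictly positive, every eigenvalue of `T(s)`
is purely imaginary. -/
theorem eigenvalues_purely_imaginary (n : ℕ) (hn : 1 ≤ n) (s : Fin n → ℝ)
    (hs : ∀ i, 0 < s i) (a : ℂ) (v : Fin n → ℂ) (hv : v ≠ 0)
    (hav : (Tmat n (fun i => (s i : ℂ))).mulVec v = a • v) :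
    a.re = 0 :=
  eigenvalues_purely_imaginary_general (fun i => (hs i).le) hv hav
end

section
/- Let s = (s_1, …, s_n) have all entries real and strictly positive, let v ∈ ℂ^n and a ∈ ℂ satisfy T(s)·v = a·v. If Σ_{i=1}^n s_i·v_i = 0, then v = 0. In other words, no nonzero eigenvector of T(s) is H_s-orthogonal to the vector (1, 1, …, 1). -/
/-!
If `Σ_j s_j v_j = 0`, then the row of `T(s) v = a v` at the first nonzero coordinate `p` of `v`
reads `-s_p v_p = a v_p`, and the row at the last nonzero coordinate `q` reads `s_q v_q = a v_q`.
Hence `-s_p = a = s_q`, which is impossible as soon as no sum `s_i + s_j` vanishes (`i = j`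
included, since `v` may have a single nonzero coordinate).
-/

/-- The matrix `T(s)` with entries in an arbitrary ring and indices in an arbitrary linear order,
which decides what lies above the diagonal. It extends `Tmat` beyond `Fin n` and `ℂ`. -/
def orderSkewMatrix {ι R : Type*} [LinearOrder ι] [NonUnitalNonAssocRing R] (s : ι → R) :
    Matrix ι ι R :=
  fun i j => if i = j then 0 else if i < j then s j else -s j

theorem Tmat_eq_orderSkewMatrix (n : ℕ) (s : Fin n → ℂ) : Tmat n s = orderSkewMatrix s := by
  ext i j
  simp only [Tmat, orderSkewMatrix]

section OrderSkewMatrix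

open Matrix

variable {ι R : Type*} [LinearOrder ι] [NonUnitalNonAssocRing R]

theorem orderSkewMatrix_self (s : ι → R) (i : ι) : orderSkewMatrix s i i = 0 :=
  if_pos rfl

theorem orderSkewMatrix_of_lt (s : ι → R) {i j : ι} (h : i < j) : orderSkewMatrix s i j = s j := by
  rw [orderSkewMatrix, if_neg h.ne, if_pos h]

theorem orderSkewMatrix_of_gt (s : ι → R) {i j : ι} (h : j < i) : orderSkewMatrix s i j = -s j := by
  rw [orderSkewMatrix, if_neg h.ne', if_neg h.not_gt]

variable [Fintype ι] {s v : ι → R} {i : ι}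

theorem orderSkewMatrix_mulVec_of_forall_lt (hv : ∀ j < i, v j = 0) :
    (orderSkewMatrix s *ᵥ v) i = ∑ j, s j * v j - s i * v i := by
  have entry (j : ι) :
      orderSkewMatrix s i j * v j = s j * v j - if i = j then s j * v j else 0 := by
    rcases lt_trichotomy i j with hij | rfl | hji
    · rw [orderSkewMatrix_of_lt s hij, if_neg hij.ne, sub_zero]
    · rw [orderSkewMatrix_self, zero_mul, if_pos rfl, sub_self]
    · simp only [hv j hji, mul_zero, ite_self, sub_zero]
  simp only [mulVec, dotProduct, entry, Finset.sum_sub_distrib, Finset.sum_ite_eq,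
    Finset.mem_univ, if_true]

theorem orderSkewMatrix_mulVec_of_forall_gt (hv : ∀ j, i < j → v j = 0) :
    (orderSkewMatrix s *ᵥ v) i = s i * v i - ∑ j, s j * v j := by
  have entry (j : ι) :
      orderSkewMatrix s i j * v j = (if i = j then s j * v j else 0) - s j * v j := by
    rcases lt_trichotomy i j with hij | rfl | hji
    · simp only [hv j hij, mul_zero, ite_self, sub_zero]
    · rw [orderSkewMatrix_self, zero_mul, if_pos rfl, sub_self]
    · rw [orderSkewMatrix_of_gt s hji, if_neg hji.ne', neg_mul, zero_sub]
  simp only [mulVec, dotProduct, entry, Finset.sum_sub_distrib, Finset.sum_ite_eq,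
    Finset.mem_univ, if_true]

theorem eigenvector_not_orthogonal_to_ones_general [NoZeroDivisors R] {a : R}
    (hs : ∀ i j, s i + s j ≠ 0) (hav : orderSkewMatrix s *ᵥ v = a • v)
    (horth : ∑ i, s i * v i = 0) : v = 0 := by
  by_contra hv
  have hsupp : ∃ i, v i ≠ 0 := Function.ne_iff.mp hv
  obtain ⟨p, hp⟩ := exists_minimal_of_wellFoundedLT (fun i => v i ≠ 0) hsupp
  obtain ⟨q, hq⟩ := exists_maximal_of_wellFoundedGT (fun i => v i ≠ 0) hsupp
  have row_p : a * v p = -s p * v p := by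
    have row := orderSkewMatrix_mulVec_of_forall_lt (s := s) fun j hj =>
      not_not.mp (hp.not_prop_of_lt hj)
    rwa [hav, horth, zero_sub, ← neg_mul] at row
  have row_q : a * v q = s q * v q := by
    have row := orderSkewMatrix_mulVec_of_forall_gt (s := s) fun j hj =>
      not_not.mp (hq.not_prop_of_gt hj)
    rwa [hav, horth, sub_zero] at row
  have ha_p : a = -s p := mul_right_cancel₀ hp.prop row_p
  have ha_q : a = s q := mul_right_cancel₀ hq.prop row_q
  exact hs q p (eq_neg_iff_add_eq_zero.mp (ha_q.symm.trans ha_p))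

end OrderSkewMatrix

/-- If `s` has all entries real and strictly positive, `v` is an eigenvector of `T(s)`
(with any eigenvalue `a`) and `Σ_i s_i v_i = 0`, then `v = 0`; i.e. no nonzero
eigenvector of `T(s)` is `H_s`-orthogonal to `(1, …, 1)`. -/
theorem eigenvector_not_orthogonal_to_ones (n : ℕ) (hn : 1 ≤ n) (s : Fin n → ℝ)
    (hs : ∀ i, 0 < s i) (v : Fin n → ℂ) (a : ℂ)
    (hav : (Tmat n (fun i => (s i : ℂ))).mulVec v = a • v)
    (horth : ∑ i : Fin n, (s i : ℂ) * v i = 0) :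
    v = 0 := by
  refine eigenvector_not_orthogonal_to_ones_general (fun i j => ?_)
    (Tmat_eq_orderSkewMatrix n _ ▸ hav) horth
  exact_mod_cast (add_pos (hs i) (hs j)).ne'
end

section
/- There exists s = (s_1, …, s_n) with all s_i real and strictly positive such that the n vectors w, T(s)·w, T(s)^2·w, …, T(s)^{n−1}·w, where w = (1, 1, …, 1) ∈ ℂ^n, are linearly independent over ℂ (equivalently, they form a basis of ℂ^n; i.e. w is a cyclic vector for T(s)). -/
/-!
The annihilator of the span of the vectors `A ^ k w` is stable under the transpose of `A`, so over
`ℂ` it contains a left eigenvector of `A` unless it is zero. Hence `w` is a cyclic vector of `A` as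
soon as no left eigenvector of `A` is orthogonal to `w` (the Hautus test).

Now let `u ≠ 0` satisfy `u T(s) = μ u` and `∑ i, u i = 0`. Comparing the entries of `u T(s)` and
`μ u` at the first nonzero coordinate `u j` gives `μ = s j`; at the last one, `u k`, it gives
`μ = -s k`. Since the `u i` sum to `0`, at least two of them are nonzero, so `j < k` and
`s j + s k = 0`, which is impossible for positive `s`.
-/

open Matrix Module Polynomial

section Cyclic

theorem pow_apply_mem_span_of_finrank_eq {R M : Type*} [CommRing R] [Nontrivial R]
    [AddCommGroup M] [Module R M] [Module.Free R M] [Module.Finite R M] {n : ℕ}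
    (hn : finrank R M = n) (f : End R M) (v : M) (m : ℕ) :
    (f ^ m) v ∈ Submodule.span R (Set.range fun k : Fin n => (f ^ (k : ℕ)) v) := by
  have hdeg : (X ^ m %ₘ f.charpoly).degree < n := by
    rw [← hn, ← f.charpoly_natDegree, ← degree_eq_natDegree f.charpoly_monic.ne_zero]
    exact degree_modByMonic_lt _ f.charpoly_monic
  rw [f.pow_eq_aeval_mod_charpoly, aeval_def, eval₂_eq_sum, ← sum_fin _ (by simp) hdeg,
    LinearMap.sum_apply]
  exact Submodule.sum_mem _ fun k _ =>
    Submodule.smul_mem _ _ (Submodule.subset_span (Set.mem_range_self k))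

variable {K V : Type*} [Field K] [IsAlgClosed K] [AddCommGroup V] [Module K V]

theorem exists_hasEigenvector_mem_of_mem_invtSubmodule {f : End K V} {W : Submodule K V}
    [FiniteDimensional K W] (hW : W ∈ f.invtSubmodule) (hne : W ≠ ⊥) :
    ∃ μ, ∃ x ∈ W, f.HasEigenvector μ x := by
  have : Nontrivial W := Submodule.nontrivial_iff_ne_bot.2 hne
  obtain ⟨μ, hμ⟩ := End.exists_eigenvalue (f.restrict hW)
  obtain ⟨x, hx⟩ := hμ.exists_hasEigenvector
  refine ⟨μ, x, x.2, End.hasEigenvector_iff.2 ⟨End.mem_eigenspace_iff.2 ?_, ?_⟩⟩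
  · exact congrArg Subtype.val hx.apply_eq_smul
  · exact fun h => hx.2 (Subtype.ext h)

theorem span_range_pow_apply_eq_top_of_forall_dual [FiniteDimensional K V] {f : End K V}
    {v : V} (h : ∀ (μ : K) (φ : Dual K V), End.HasEigenvector f.dualMap μ φ → φ v ≠ 0) :
    Submodule.span K (Set.range fun k : ℕ => (f ^ k) v) = ⊤ := by
  set W := Submodule.span K (Set.range fun k : ℕ => (f ^ k) v)
  have hv : ∀ k, (f ^ k) v ∈ W := fun k => Submodule.subset_span (Set.mem_range_self k)
  have hmap : W ≤ W.comap f := by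
    refine Submodule.span_le.2 ?_
    rintro _ ⟨k, rfl⟩
    simpa only [pow_succ', End.mul_apply, SetLike.mem_coe, Submodule.mem_comap] using hv (k + 1)
  have hann : W.dualAnnihilator ∈ End.invtSubmodule f.dualMap := fun φ hφ =>
    (Submodule.mem_dualAnnihilator _).2 fun x hx =>
      (Submodule.mem_dualAnnihilator φ).1 hφ (f x) (hmap hx)
  by_contra hne
  obtain ⟨μ, φ, hφW, hφ⟩ := exists_hasEigenvector_mem_of_mem_invtSubmodule hann
    (mt Submodule.dualAnnihilator_eq_bot_iff.1 hne)
  exact h μ φ hφ ((Submodule.mem_dualAnnihilator φ).1 hφW v (hv 0))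

theorem linearIndependent_pow_mulVec_of_forall_vecMul {ι : Type*} [Fintype ι] [DecidableEq ι]
    {n : ℕ} (hn : Fintype.card ι = n) {A : Matrix ι ι K} {w : ι → K}
    (h : ∀ (μ : K) (u : ι → K), u ᵥ* A = μ • u → u ⬝ᵥ w = 0 → u = 0) :
    LinearIndependent K fun k : Fin n => (A ^ (k : ℕ)) *ᵥ w := by
  have hdual : ∀ (μ : K) (φ : Dual K (ι → K)),
      End.HasEigenvector (toLin' A).dualMap μ φ → φ w ≠ 0 := by
    intro μ φ hφ hφw
    obtain ⟨u, rfl⟩ := (dotProductEquiv K ι).surjective φ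
    refine hφ.2 ((LinearEquiv.map_eq_zero_iff _).2 (h μ u ?_ hφw))
    refine (dotProductEquiv K ι).injective (LinearMap.ext fun x => ?_)
    simpa [dotProduct_mulVec] using LinearMap.congr_fun hφ.apply_eq_smul x
  have hfinrank : finrank K (ι → K) = n := by rw [finrank_fintype_fun_eq_card, hn]
  refine linearIndependent_of_top_le_span_of_card_eq_finrank ?_ (by simp [hn])
  rw [← span_range_pow_apply_eq_top_of_forall_dual hdual, Submodule.span_le]
  rintro _ ⟨m, rfl⟩
  simpa only [← toLin'_pow, toLin'_apply, SetLike.mem_coe] using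
    pow_apply_mem_span_of_finrank_eq hfinrank (toLin' A) w m

end Cyclic

section LeftEigenvector

variable {n : ℕ} {s u : Fin n → ℂ} {j : Fin n}

theorem vecMul_Tmat_apply_of_forall_lt (hu : ∑ i, u i = 0) (hj : ∀ i < j, u i = 0) :
    (u ᵥ* Tmat n s) j = s j * u j := by
  have hterm : ∀ i, u i * Tmat n s i j = (if i = j then s j * u j else 0) - s j * u i := by
    intro i
    rcases lt_trichotomy i j with h | rfl | h
    · simp [hj i h, h.ne]
    · simp [Tmat]
    · simp [Tmat, h.ne', h.not_gt, mul_comm]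
  simp [vecMul, dotProduct, hterm, ← Finset.mul_sum, hu]

theorem vecMul_Tmat_apply_of_forall_gt (hu : ∑ i, u i = 0) (hj : ∀ i > j, u i = 0) :
    (u ᵥ* Tmat n s) j = -s j * u j := by
  have hterm : ∀ i, u i * Tmat n s i j = s j * u i - (if i = j then s j * u j else 0) := by
    intro i
    rcases lt_trichotomy i j with h | rfl | h
    · simp [Tmat, h, h.ne, mul_comm]
    · simp [Tmat]
    · simp [hj i h, h.ne']
  simp [vecMul, dotProduct, hterm, ← Finset.mul_sum, hu]

theorem exists_lt_add_eq_zero_of_vecMul_Tmat {μ : ℂ} (hμ : u ᵥ* Tmat n s = μ • u)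
    (hu : ∑ i, u i = 0) (hne : u ≠ 0) : ∃ j k, j < k ∧ s j + s k = 0 := by
  have hsupp : ∃ i, u i ≠ 0 := Function.ne_iff.1 hne
  obtain ⟨j, hj⟩ := exists_minimal_of_wellFoundedLT (u · ≠ 0) hsupp
  obtain ⟨k, hk⟩ := exists_maximal_of_wellFoundedGT (u · ≠ 0) hsupp
  have hbefore : ∀ i < j, u i = 0 := fun i hi => not_not.1 (hj.not_prop_of_lt hi)
  have hafter : ∀ i > k, u i = 0 := fun i hi => not_not.1 (hk.not_prop_of_gt hi)
  have hμj : s j = μ := mul_right_cancel₀ hj.prop <| by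
    rw [← vecMul_Tmat_apply_of_forall_lt hu hbefore, hμ, Pi.smul_apply, smul_eq_mul]
  have hμk : -s k = μ := mul_right_cancel₀ hk.prop <| by
    rw [← vecMul_Tmat_apply_of_forall_gt hu hafter, hμ, Pi.smul_apply, smul_eq_mul]
  have hjk : j ≠ k := by
    rintro rfl
    refine hj.prop ?_
    rwa [Fintype.sum_eq_single j fun i hi => hi.lt_or_gt.elim (hbefore i) (hafter i)] at hu
  have hle : j ≤ k := not_lt.1 fun hkj => hk.prop (hbefore k hkj)
  exact ⟨j, k, hle.lt_of_ne hjk, by rw [hμj, ← hμk, neg_add_cancel]⟩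

end LeftEigenvector

theorem exists_pos_real_cyclic_ones_general (n : ℕ) (s : Fin n → ℂ)
    (hs : ∀ j k, j < k → s j + s k ≠ 0) :
    LinearIndependent ℂ
      (fun k : Fin n => ((Tmat n s) ^ (k : ℕ)).mulVec (fun _ => (1 : ℂ))) := by
  refine linearIndependent_pow_mulVec_of_forall_vecMul (Fintype.card_fin n) fun μ u hμ hu => ?_
  by_contra hne
  have hsum : ∑ i, u i = 0 := by simpa [dotProduct] using hu
  obtain ⟨j, k, hjk, hadd⟩ := exists_lt_add_eq_zero_of_vecMul_Tmat hμ hsum hne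
  exact hs j k hjk hadd

/-- There exists `s` with all entries real and strictly positive such that the `n` vectors
`w, T(s)w, T(s)²w, …, T(s)^{n-1}w`, where `w = (1, …, 1)`, are linearly independent
over `ℂ`; i.e. `w` is a cyclic vector for `T(s)`. -/
theorem exists_pos_real_cyclic_ones (n : ℕ) (hn : 1 ≤ n) :
    ∃ s : Fin n → ℝ, (∀ i, 0 < s i) ∧
      LinearIndependent ℂ
        (fun k : Fin n =>
          ((Tmat n (fun i => (s i : ℂ))) ^ (k : ℕ)).mulVec (fun _ => (1 : ℂ))) := by
  exact ⟨fun _ => 1, fun _ => one_pos,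
    exists_pos_real_cyclic_ones_general n _ fun _ _ _ => by norm_num⟩
end
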